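/- In the de Bruijn digraph B(Δ, D), let c be a constant string (c_p = h for all positions p). Then for each k with 1 ≤ k ≤ D, the number of vertices at directed distance exactly k from c equals (Δ−1)·Δ^{k−1}, and consequently the sum of directed distances from c to all Δ^D vertices equals (D·Δ^{D+1} − (D+1)·Δ^D + 1)/(Δ−1). -/

import Mathlib

/-- Adjacency in the de Bruijn digraph `B(Δ, D)`: there is an edge
`u → v` iff the first `D−1` symbols of `v` equal the last `D−1` symbols
of `u`. -/
def deBruijnAdj {Δ D : ℕ} (u v : Fin D → Fin Δ) : Prop :=
  ∀ (k : ℕ) (h : k + 1 < D), v ⟨k, Nat.lt_of_succ_lt h⟩ = u ⟨k + 1, h⟩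

/-- `f` is a directed walk of length `n` in the de Bruijn digraph. -/
def deBruijnWalk {Δ D : ℕ} (n : ℕ) (f : ℕ → Fin D → Fin Δ) : Prop :=
  ∀ k < n, deBruijnAdj (f k) (f (k + 1))

/-- Directed graph distance in the de Bruijn digraph: the length of a
shortest directed walk from `x` to `y` (`0` from a vertex to itself). -/
noncomputable def deBruijnDist {Δ D : ℕ} (x y : Fin D → Fin Δ) : ℕ :=
  sInf {n : ℕ | ∃ f : ℕ → Fin D → Fin Δ, f 0 = x ∧ f n = y ∧ deBruijnWalk n f}

theorem walk_shift {Δ D : ℕ} (n : ℕ) (f : ℕ → Fin D → Fin Δ) (hf : deBruijnWalk n f) :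
    ∀ j ≤ n, ∀ (i : ℕ) (hi : i + j < D), f j ⟨i, by omega⟩ = f 0 ⟨i + j, hi⟩ := by
  intro j
  induction j with
  | zero => intro _ i hi; rfl
  | succ j ih =>
    intro hj i hi
    rw [hf j (by omega) i (by omega), ih (by omega) (i + 1) (by omega)]
    congr 2
    omega

theorem walk_exists {Δ D : ℕ} (h : Fin Δ) (c : Fin D → Fin Δ) (hc : ∀ p, c p = h)
    (v : Fin D → Fin Δ) (k : ℕ) (hv : ∀ i : Fin D, i.val + k < D → v i = h) :
    ∃ f : ℕ → Fin D → Fin Δ, f 0 = c ∧ f k = v ∧ deBruijnWalk k f := by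
  let S : ℕ → Fin Δ := fun m =>
    if m < k then h else if hm : m - k < D then v ⟨m - k, hm⟩ else h
  refine ⟨fun j p => S (j + p.val), ?_, ?_, ?_⟩
  · funext p
    rw [hc p]
    have := p.isLt
    simp only [S]
    split_ifs with h1 h2
    · rfl
    · exact hv _ (by simp only; omega)
    · rfl
  · funext p
    have := p.isLt
    simp [S]
  · intro j _ m hm
    simp only
    congr 1
    omega

theorem dist_le_iff {Δ D : ℕ} (h : Fin Δ) (c : Fin D → Fin Δ) (hc : ∀ p, c p = h)
    (v : Fin D → Fin Δ) (k : ℕ) :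
    deBruijnDist c v ≤ k ↔ ∀ i : Fin D, i.val + k < D → v i = h := by
  constructor
  · intro hk i hi
    have hne : {n : ℕ | ∃ f : ℕ → Fin D → Fin Δ, f 0 = c ∧ f n = v ∧ deBruijnWalk n f}.Nonempty :=
      ⟨D, walk_exists h c hc v D (fun i hi => by omega)⟩
    obtain ⟨f, h0, hn, hw⟩ := Nat.sInf_mem hne
    change f (deBruijnDist c v) = v at hn
    have := walk_shift _ f hw (deBruijnDist c v) le_rfl i.val (by omega)
    rw [hn, h0, hc] at this
    exact this
  · intro hv
    exact Nat.sInf_le (walk_exists h c hc v k hv)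

theorem card_dist_le {Δ D : ℕ} (h : Fin Δ) (c : Fin D → Fin Δ) (hc : ∀ p, c p = h)
    (k : ℕ) (hk : k ≤ D) :
    (Finset.univ.filter fun v : Fin D → Fin Δ => deBruijnDist c v ≤ k).card = Δ ^ k := by
  have : (Finset.univ.filter fun v : Fin D → Fin Δ => deBruijnDist c v ≤ k)
      = Fintype.piFinset (fun i : Fin D => if i.val + k < D then {h} else Finset.univ) := by
    ext v
    simp only [Finset.mem_filter, Finset.mem_univ, true_and, dist_le_iff h c hc,
      Fintype.mem_piFinset]
    refine forall_congr' fun i => ?_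
    split_ifs with hi <;> simp [hi]
  rw [this, Fintype.card_piFinset]
  have h2 : ∀ i : Fin D, (if i.val + k < D then ({h} : Finset (Fin Δ)) else Finset.univ).card
      = (fun m : ℕ => if m + k < D then 1 else Δ) i.val := by
    intro i
    simp only
    split_ifs <;> simp
  rw [Finset.prod_congr rfl (fun i _ => h2 i), Fin.prod_univ_eq_prod_range (fun m : ℕ => if m + k < D then 1 else Δ) D]
  obtain ⟨e, rfl⟩ := Nat.exists_eq_add_of_le' hk
  rw [Finset.prod_range_add]
  rw [Finset.prod_eq_one, Finset.prod_congr rfl (g := fun _ => Δ)]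
  · simp
  · intro x _
    rw [if_neg]; omega
  · intro x hx
    rw [Finset.mem_range] at hx
    rw [if_pos]; omega

/-- **Distance distribution from a constant de Bruijn node.**
In `B(Δ, D)` with `Δ ≥ 2`, `D ≥ 1`, let `c` be a constant string
(`c p = h` for all `p`).  For each `1 ≤ k ≤ D` the number of vertices at
directed distance exactly `k` from `c` is `(Δ−1)·Δ^{k−1}`, and consequently
the sum of directed distances from `c` to all `Δ^D` vertices equals
`(D·Δ^{D+1} − (D+1)·Δ^D + 1)/(Δ−1)`. -/
theorem deBruijn_constant_node_access_cost (Δ D : ℕ) (hΔ : 2 ≤ Δ) (hD : 1 ≤ D)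
    (h : Fin Δ) (c : Fin D → Fin Δ) (hc : ∀ p, c p = h) :
    (∀ k : ℕ, 1 ≤ k → k ≤ D →
      Nat.card {v : Fin D → Fin Δ // deBruijnDist c v = k}
        = (Δ - 1) * Δ ^ (k - 1)) ∧
    (∑ v : Fin D → Fin Δ, (deBruijnDist c v : ℝ))
      = ((D : ℝ) * (Δ : ℝ) ^ (D + 1) - ((D : ℝ) + 1) * (Δ : ℝ) ^ D + 1)
        / ((Δ : ℝ) - 1) := by
  classical
  constructor
  · intro k h1 hk
    obtain ⟨j, rfl⟩ := Nat.exists_eq_add_of_le' h1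
    rw [Nat.card_eq_fintype_card, Fintype.card_subtype]
    have a := card_dist_le h c hc (j + 1) hk
    have b := card_dist_le h c hc j (by omega)
    have e : (Finset.univ.filter fun v : Fin D → Fin Δ => deBruijnDist c v ≤ j + 1)
        = (Finset.univ.filter fun v : Fin D → Fin Δ => deBruijnDist c v ≤ j) ∪
          (Finset.univ.filter fun v : Fin D → Fin Δ => deBruijnDist c v = j + 1) := by
      ext v
      simp only [Finset.mem_filter, Finset.mem_univ, true_and, Finset.mem_union]
      omega
    rw [e, Finset.card_union_of_disjoint, b] at a
    · rw [Nat.add_sub_cancel, Nat.sub_mul, one_mul, ← Nat.pow_succ']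
      exact (Nat.sub_eq_of_eq_add' a.symm).symm
    · rw [Finset.disjoint_filter]
      intro v _ h3 h4
      omega
  · have e : ∀ v : Fin D → Fin Δ, (deBruijnDist c v : ℝ)
        = ∑ k ∈ Finset.range D, (1 - if deBruijnDist c v ≤ k then (1 : ℝ) else 0) := by
      intro v
      have hle : deBruijnDist c v ≤ D := (dist_le_iff h c hc v D).2 (fun i hi => by omega)
      obtain ⟨e, he⟩ := Nat.exists_eq_add_of_le hle
      generalize deBruijnDist c v = d at *
      subst he
      rw [Finset.sum_range_add, Finset.sum_congr rfl (g := fun _ => (1 : ℝ))]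
      · simp
      · intro x hx
        rw [Finset.mem_range] at hx
        rw [if_neg (by omega)]; simp
    rw [Finset.sum_congr rfl (fun v _ => e v), Finset.sum_comm]
    have e2 : ∀ k ∈ Finset.range D,
        (∑ v : Fin D → Fin Δ, (1 - if deBruijnDist c v ≤ k then (1 : ℝ) else 0))
        = (Δ : ℝ) ^ D - (Δ : ℝ) ^ k := by
      intro k hk
      rw [Finset.mem_range] at hk
      rw [Finset.sum_sub_distrib, Finset.sum_boole, card_dist_le h c hc k hk.le]
      simp
    have hne : (Δ : ℝ) - 1 ≠ 0 := by
      have : (2 : ℝ) ≤ Δ := by exact_mod_cast hΔ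
      linarith
    rw [Finset.sum_congr rfl e2, Finset.sum_sub_distrib, geom_sum_eq (by intro hh; exact hne (by linarith))]
    simp only [Finset.sum_const, Finset.card_range, nsmul_eq_mul]
    field_simp
    ring
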